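/- Let n, d₁, d₂, d₃ ≥ 1 and M₁, M₂, M₃ ∈ ℝ, and suppose a : ℝⁿ × ℝ^{d₁} × ℝ^{d₂} × ℝ^{d₃} → ℂ is smooth and satisfies, for all multi-indices α, β, η, γ, |∂_x^γ ∂_{ξ′}^α ∂_{ξ″}^β ∂_{ξ‴}^η a| ≤ C ⟨(ξ′,ξ″,ξ‴)⟩^{M₁−|α|} ⟨(ξ″,ξ‴)⟩^{M₂−|β|} ⟨ξ‴⟩^{M₃−|η|} for all arguments, where ⟨·⟩ := (1+|·|²)^{1/2}. Then: (i) on the region {|ξ′| ≤ |ξ″|}, for all multi-indices there is C′ with |∂_x^γ ∂_{(ξ′,ξ″)}^α ∂_{ξ‴}^η a| ≤ C′ ⟨(ξ′,ξ″,ξ‴)⟩^{M₁+M₂−|α|} ⟨ξ‴⟩^{M₃−|η|}; and (ii) on the region {|ξ″| ≤ |ξ‴|}, for all multi-indices there is C′ with |∂_x^γ ∂_{ξ′}^α ∂_{(ξ″,ξ‴)}^β a| ≤ C′ ⟨(ξ′,ξ″,ξ‴)⟩^{M₁−|α|} ⟨(ξ″,ξ‴)⟩^{M₂+M₃−|β|}.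 -/

import Mathlib

set_option synthInstance.maxHeartbeats 1000000
set_option maxHeartbeats 1000000

/-- The Japanese bracket `⟨v⟩ = (1 + |v|²)^{1/2}`. -/
noncomputable def jap {d : ℕ} (v : EuclideanSpace ℝ (Fin d)) : ℝ :=
  Real.sqrt (1 + ‖v‖ ^ 2)

/-- The Japanese bracket of a pair. -/
noncomputable def jap2 {d e : ℕ} (u : EuclideanSpace ℝ (Fin d))
    (v : EuclideanSpace ℝ (Fin e)) : ℝ :=
  Real.sqrt (1 + ‖u‖ ^ 2 + ‖v‖ ^ 2)

/-- The Japanese bracket of a triple. -/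
noncomputable def jap3 {d e f : ℕ} (u : EuclideanSpace ℝ (Fin d))
    (v : EuclideanSpace ℝ (Fin e)) (w : EuclideanSpace ℝ (Fin f)) : ℝ :=
  Real.sqrt (1 + ‖u‖ ^ 2 + ‖v‖ ^ 2 + ‖w‖ ^ 2)

section Helpers

variable {E F G P : Type*} [NormedAddCommGroup E] [NormedSpace ℝ E]
  [NormedAddCommGroup F] [NormedSpace ℝ F] [NormedAddCommGroup G] [NormedSpace ℝ G]
  [NormedAddCommGroup P] [NormedSpace ℝ P]

/-- Flip of a real bilinear map. -/
noncomputable def flipR (A B C : Type*) [NormedAddCommGroup A] [NormedSpace ℝ A]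
    [NormedAddCommGroup B] [NormedSpace ℝ B] [NormedAddCommGroup C] [NormedSpace ℝ C]
    (T : A →L[ℝ] B →L[ℝ] C) : B →L[ℝ] A →L[ℝ] C := T.flip

theorem clm_contDiff (A B : Type*) [NormedAddCommGroup A] [NormedSpace ℝ A]
    [NormedAddCommGroup B] [NormedSpace ℝ B] (T : A →L[ℝ] B) {f : E → A}
    (hf : ContDiff ℝ (⊤ : ℕ∞) f) :
    ContDiff ℝ (⊤ : ℕ∞) (fun x => T (f x)) := T.contDiff.comp hf

theorem clm_fderiv (A B : Type*) [NormedAddCommGroup A] [NormedSpace ℝ A]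
    [NormedAddCommGroup B] [NormedSpace ℝ B] (T : A →L[ℝ] B) {f : E → A} {x : E}
    (hf : DifferentiableAt ℝ f x) :
    fderiv ℝ (fun x => T (f x)) x = T.comp (fderiv ℝ f x) :=
  (T.hasFDerivAt.comp x hf.hasFDerivAt).fderiv

theorem clm_iter (A B : Type*) [NormedAddCommGroup A] [NormedSpace ℝ A]
    [NormedAddCommGroup B] [NormedSpace ℝ B] (T : A →L[ℝ] B) {f : E → A}
    (hf : ContDiff ℝ (⊤ : ℕ∞) f) (k : ℕ) (x : E) :
    iteratedFDeriv ℝ k (fun x => T (f x)) x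
      = T.compContinuousMultilinearMap (iteratedFDeriv ℝ k f x) :=
  T.iteratedFDeriv_comp_left hf.contDiffAt (by exact_mod_cast le_top)

/-- Left uncurrying as a continuous linear map. -/
noncomputable def uncL (E G : Type*) [NormedAddCommGroup E] [NormedSpace ℝ E]
    [NormedAddCommGroup G] [NormedSpace ℝ G] (k : ℕ) :
    (E →L[ℝ] (E [×k]→L[ℝ] G)) →L[ℝ] (E [×(k + 1)]→L[ℝ] G) :=
  ((continuousMultilinearCurryLeftEquiv ℝ (fun _ : Fin (k + 1) => E)
        G).symm.toContinuousLinearEquiv : _ →L[ℝ] _)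

theorem iter_succ_uncL (f : E → G) (k : ℕ) (x : E) :
    iteratedFDeriv ℝ (k + 1) f x = uncL E G k (fderiv ℝ (iteratedFDeriv ℝ k f) x) := rfl

/-- Parametric iterated derivatives of a smooth function are jointly smooth. -/
theorem contDiff_iter_param (k : ℕ) {f : P → E → G}
    (hf : ContDiff ℝ (⊤ : ℕ∞) (Function.uncurry f)) :
    ContDiff ℝ (⊤ : ℕ∞) (fun q : P × E => iteratedFDeriv ℝ k (f q.1) q.2) := by
  induction k with
  | zero =>
    simp only [iteratedFDeriv_zero_eq_comp, Function.comp_def]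
    exact (continuousMultilinearCurryFin0 ℝ E G).symm.contDiff.comp hf
  | succ k ih =>
    simp only [iter_succ_uncL]
    refine clm_contDiff (E →L[ℝ] (E [×k]→L[ℝ] G)) (E [×(k + 1)]→L[ℝ] G) (uncL E G k)
      (f := fun q : P × E => fderiv ℝ (iteratedFDeriv ℝ k (f q.1)) q.2) ?_
    refine ContDiff.fderiv (m := ((⊤ : ℕ∞) : WithTop ℕ∞))
      (f := fun (q : P × E) e => iteratedFDeriv ℝ k (f q.1) e) ?_ contDiff_snd (by simp)
    exact ih.comp ((contDiff_fst.comp contDiff_fst).prodMk contDiff_snd)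

theorem contDiff_iter_param' (k : ℕ) {f : P → E → G}
    (hf : ContDiff ℝ (⊤ : ℕ∞) (Function.uncurry f)) {g : P → E}
    (hg : ContDiff ℝ (⊤ : ℕ∞) g) :
    ContDiff ℝ (⊤ : ℕ∞) (fun q : P => iteratedFDeriv ℝ k (f q) (g q)) :=
  (contDiff_iter_param k hf).comp (contDiff_id.prodMk hg)

theorem fderiv_partial_fst {χ : E × F → G} (h : ContDiff ℝ (⊤ : ℕ∞) χ) (u : E) (v : F) :
    fderiv ℝ (fun u => χ (u, v)) u = (fderiv ℝ χ (u, v)).comp (ContinuousLinearMap.inl ℝ E F) := by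
  have h1 := (h.differentiable (by simp) (u, v)).hasFDerivAt
  exact (HasFDerivAt.comp u h1 (hasFDerivAt_prodMk_left u v)).fderiv

theorem fderiv_partial_snd {χ : E × F → G} (h : ContDiff ℝ (⊤ : ℕ∞) χ) (u : E) (v : F) :
    fderiv ℝ (fun v => χ (u, v)) v = (fderiv ℝ χ (u, v)).comp (ContinuousLinearMap.inr ℝ E F) := by
  have h1 := (h.differentiable (by simp) (u, v)).hasFDerivAt
  exact (HasFDerivAt.comp v h1 (hasFDerivAt_prodMk_right u v)).fderiv

theorem fderiv_split {χ : E × F → G} (h : ContDiff ℝ (⊤ : ℕ∞) χ) (p : E × F) :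
    fderiv ℝ χ p = (fderiv ℝ (fun u => χ (u, p.2)) p.1).comp (ContinuousLinearMap.fst ℝ E F)
      + (fderiv ℝ (fun v => χ (p.1, v)) p.2).comp (ContinuousLinearMap.snd ℝ E F) := by
  rw [fderiv_partial_fst h, fderiv_partial_snd h]
  ext w
  · simp [show ((0, 0) : E × F) = 0 from rfl]
  · simp [show ((0, 0) : E × F) = 0 from rfl]

theorem mixed_symm {χ : E × F → G} (h : ContDiff ℝ (⊤ : ℕ∞) χ) (u : E) (v : F) (a : E) (w : F) :
    fderiv ℝ (fun v => fderiv ℝ (fun u => χ (u, v)) u) v w a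
      = fderiv ℝ (fun u => fderiv ℝ (fun v => χ (u, v)) v) u a w := by
  have hD : ContDiff ℝ (⊤ : ℕ∞) (fderiv ℝ χ) := h.fderiv_right (by simp)
  have hs := (h.contDiffAt (x := (u, v))).isSymmSndFDerivAt
    (by rw [minSmoothness_of_isRCLikeNormedField]; exact WithTop.coe_le_coe.2 (le_top : (2 : ℕ∞) ≤ ⊤))
  simp only [fderiv_partial_fst h, fderiv_partial_snd h]
  have hd1 : DifferentiableAt ℝ (fun v => fderiv ℝ χ (u, v)) v :=
    (hD.comp (contDiff_prodMk_right u)).differentiable (by simp) v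
  have hd2 : DifferentiableAt ℝ (fun u => fderiv ℝ χ (u, v)) u :=
    (hD.comp (contDiff_prodMk_left v)).differentiable (by simp) u
  rw [fderiv_clm_comp hd1 (by fun_prop), fderiv_clm_comp hd2 (by fun_prop)]
  simp only [fderiv_partial_fst hD, fderiv_partial_snd hD]
  simp
  exact hs _ _

/-- The flip map. -/
noncomputable def flipML (E F G : Type*) [NormedAddCommGroup E] [NormedSpace ℝ E]
    [NormedAddCommGroup F] [NormedSpace ℝ F] [NormedAddCommGroup G] [NormedSpace ℝ G] (k : ℕ) :
    (E [×k]→L[ℝ] (F →L[ℝ] G)) →L[ℝ] (F →L[ℝ] (E [×k]→L[ℝ] G)) :=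
  let T : F →L[ℝ] ((E [×k]→L[ℝ] (F →L[ℝ] G)) →L[ℝ] (E [×k]→L[ℝ] G)) :=
    (ContinuousLinearMap.compContinuousMultilinearMapL ℝ (fun _ : Fin k => E) (F →L[ℝ] G) G).comp
      (ContinuousLinearMap.apply ℝ G : F →L[ℝ] (F →L[ℝ] G) →L[ℝ] G)
  flipR F (E [×k]→L[ℝ] (F →L[ℝ] G)) (E [×k]→L[ℝ] G) T

theorem flipML_apply (k : ℕ) (T : E [×k]→L[ℝ] (F →L[ℝ] G)) (w : F) (m : Fin k → E) :
    flipML E F G k T w m = T m w := rfl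

theorem fderiv_iter_comm (k : ℕ) {ψ : E × F → G} (h : ContDiff ℝ (⊤ : ℕ∞) ψ) (u : E) (v : F) :
    fderiv ℝ (fun v => iteratedFDeriv ℝ k (fun u => ψ (u, v)) u) v
      = flipML E F G k (iteratedFDeriv ℝ k (fun u => fderiv ℝ (fun v => ψ (u, v)) v) u) := by
  induction k generalizing u v with
  | zero =>
    simp only [iteratedFDeriv_zero_eq_comp, Function.comp_def]
    have : DifferentiableAt ℝ (fun v => ψ (u, v)) v :=
      (h.comp (contDiff_prodMk_right u)).differentiable (by simp) v
    have h0 := (continuousMultilinearCurryFin0 ℝ E G).symm.comp_fderiv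
      (f := fun v => ψ (u, v)) (x := v)
    simp only [Function.comp_def] at h0
    rw [h0]
    ext w m
    rfl
  | succ k ih =>
    have hχ : ContDiff ℝ (⊤ : ℕ∞)
        (fun q : E × F => iteratedFDeriv ℝ k (fun u => ψ (u, q.2)) q.1) :=
      contDiff_iter_param' (f := fun (q : E × F) u => ψ (u, q.2)) k
        (h.comp (contDiff_snd.prodMk (contDiff_snd.comp contDiff_fst))) contDiff_fst
    have hd : ContDiff ℝ (⊤ : ℕ∞) (fun q : E × F => fderiv ℝ (fun v => ψ (q.1, v)) q.2) :=
      ContDiff.fderiv (m := ((⊤ : ℕ∞) : WithTop ℕ∞)) (f := fun (q : E × F) v => ψ (q.1, v))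
        (h.comp ((contDiff_fst.comp contDiff_fst).prodMk contDiff_snd)) contDiff_snd (by simp)
    have hd1 : ContDiff ℝ (⊤ : ℕ∞) (fun u => fderiv ℝ (fun v => ψ (u, v)) v) :=
      hd.comp (contDiff_prodMk_left v)
    have hd2 : DifferentiableAt ℝ
        (fun u => iteratedFDeriv ℝ k (fun u => fderiv ℝ (fun v => ψ (u, v)) v) u) u :=
      (contDiff_iter_param' (f := fun (_ : E) u => fderiv ℝ (fun v => ψ (u, v)) v) k
        (hd1.comp contDiff_snd) contDiff_id).differentiable (by simp) u
    ext w m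
    rw [flipML_apply, iteratedFDeriv_succ_apply_left]
    simp only [iter_succ_uncL]
    have hd3 : DifferentiableAt ℝ
        (fun v => fderiv ℝ (iteratedFDeriv ℝ k fun u => ψ (u, v)) u) v := by
      have h4 : ContDiff ℝ (⊤ : ℕ∞)
          (fun v => fderiv ℝ (iteratedFDeriv ℝ k fun u => ψ (u, v)) u) :=
        ContDiff.fderiv (m := ((⊤ : ℕ∞) : WithTop ℕ∞))
          (f := fun (v : F) u => iteratedFDeriv ℝ k (fun u => ψ (u, v)) u)
          (hχ.comp (contDiff_snd.prodMk contDiff_fst)) contDiff_const (by simp)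
      exact h4.differentiable (by simp) v
    rw [clm_fderiv (E →L[ℝ] (E [×k]→L[ℝ] G)) (E [×(k + 1)]→L[ℝ] G) (uncL E G k) hd3]
    have hs := mixed_symm hχ u v (m 0) w
    simp only [ih] at hs
    have hc := clm_fderiv (E [×k]→L[ℝ] (F →L[ℝ] G)) (F →L[ℝ] (E [×k]→L[ℝ] G))
      (flipML E F G k) hd2
    rw [hc] at hs
    have := congrArg (fun T => T (Fin.tail m)) hs
    exact this

/-- Iterated derivative on a product as a fixed linear combination of nested partial ones. -/
theorem iter_prod_split (E F G : Type*) [NormedAddCommGroup E] [NormedSpace ℝ E]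
    [NormedAddCommGroup F] [NormedSpace ℝ F] [NormedAddCommGroup G] [NormedSpace ℝ G] (N : ℕ) :
    ∃ (ι : Type) (_ : Fintype ι) (k m : ι → ℕ)
      (L : ∀ i, (E [×(k i)]→L[ℝ] (F [×(m i)]→L[ℝ] G)) →L[ℝ] ((E × F) [×N]→L[ℝ] G)),
      (∀ i, k i + m i = N) ∧ ∀ g : E × F → G, ContDiff ℝ (⊤ : ℕ∞) g → ∀ p : E × F,
        iteratedFDeriv ℝ N g p = ∑ i, L i (iteratedFDeriv ℝ (k i)
          (fun u => iteratedFDeriv ℝ (m i) (fun v => g (u, v)) p.2) p.1) := by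
  induction N with
  | zero =>
    refine ⟨Unit, inferInstance, fun _ => 0, fun _ => 0, fun _ =>
      ((continuousMultilinearCurryFin0 ℝ (E × F) G).symm.toContinuousLinearEquiv :
          G →L[ℝ] ((E × F) [×0]→L[ℝ] G)).comp
        (((continuousMultilinearCurryFin0 ℝ F G).toContinuousLinearEquiv :
          (F [×0]→L[ℝ] G) →L[ℝ] G).comp
        ((continuousMultilinearCurryFin0 ℝ E (F [×0]→L[ℝ] G)).toContinuousLinearEquiv :
          (E [×0]→L[ℝ] (F [×0]→L[ℝ] G)) →L[ℝ] (F [×0]→L[ℝ] G))), fun _ => rfl, ?_⟩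
    intro g _ p
    ext v
    simp
  | succ N ih =>
    obtain ⟨ι, hι, k, m, L, hkm, hL⟩ := ih
    let J : ((E × F) →L[ℝ] ((E × F) [×N]→L[ℝ] G)) →L[ℝ] ((E × F) [×(N + 1)]→L[ℝ] G) :=
      ((continuousMultilinearCurryLeftEquiv ℝ (fun _ : Fin (N + 1) => E × F)
        G).symm.toContinuousLinearEquiv : _ →L[ℝ] _)
    let A : ∀ i, (E [×(k i + 1)]→L[ℝ] (F [×(m i)]→L[ℝ] G)) →L[ℝ]
        (E →L[ℝ] (E [×(k i)]→L[ℝ] (F [×(m i)]→L[ℝ] G))) := fun i =>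
      ((continuousMultilinearCurryLeftEquiv ℝ (fun _ : Fin (k i + 1) => E)
        (F [×(m i)]→L[ℝ] G)).toContinuousLinearEquiv : _ →L[ℝ] _)
    let B0 : ∀ i, (F [×(m i + 1)]→L[ℝ] G) →L[ℝ] (F →L[ℝ] (F [×(m i)]→L[ℝ] G)) := fun i =>
      ((continuousMultilinearCurryLeftEquiv ℝ (fun _ : Fin (m i + 1) => F)
        G).toContinuousLinearEquiv : _ →L[ℝ] _)
    let B : ∀ i, (E [×(k i)]→L[ℝ] (F [×(m i + 1)]→L[ℝ] G)) →L[ℝ]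
        (F →L[ℝ] (E [×(k i)]→L[ℝ] (F [×(m i)]→L[ℝ] G))) := fun i =>
      (flipML E F (F [×(m i)]→L[ℝ] G) (k i)).comp
        (ContinuousLinearMap.compContinuousMultilinearMapL ℝ (fun _ : Fin (k i) => E) _ _ (B0 i))
    let RA : ∀ i, (E →L[ℝ] (E [×(k i)]→L[ℝ] (F [×(m i)]→L[ℝ] G))) →L[ℝ]
        ((E × F) →L[ℝ] (E [×(k i)]→L[ℝ] (F [×(m i)]→L[ℝ] G))) := fun i =>
      ContinuousLinearMap.precomp _ (ContinuousLinearMap.fst ℝ E F)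
    let RB : ∀ i, (F →L[ℝ] (E [×(k i)]→L[ℝ] (F [×(m i)]→L[ℝ] G))) →L[ℝ]
        ((E × F) →L[ℝ] (E [×(k i)]→L[ℝ] (F [×(m i)]→L[ℝ] G))) := fun i =>
      ContinuousLinearMap.precomp _ (ContinuousLinearMap.snd ℝ E F)
    let Q : ∀ i, ((E × F) →L[ℝ] (E [×(k i)]→L[ℝ] (F [×(m i)]→L[ℝ] G))) →L[ℝ]
        ((E × F) →L[ℝ] ((E × F) [×N]→L[ℝ] G)) := fun i =>
      ContinuousLinearMap.postcomp _ (L i)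
    let LA : ∀ i, (E [×(k i + 1)]→L[ℝ] (F [×(m i)]→L[ℝ] G)) →L[ℝ]
        ((E × F) [×(N + 1)]→L[ℝ] G) := fun i => J.comp ((Q i).comp ((RA i).comp (A i)))
    let LB : ∀ i, (E [×(k i)]→L[ℝ] (F [×(m i + 1)]→L[ℝ] G)) →L[ℝ]
        ((E × F) [×(N + 1)]→L[ℝ] G) := fun i => J.comp ((Q i).comp ((RB i).comp (B i)))
    refine ⟨ι ⊕ ι, inferInstance, Sum.elim (fun i => k i + 1) k, Sum.elim m (fun i => m i + 1),
      fun i => match i with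
        | Sum.inl i => LA i
        | Sum.inr i => LB i, ?_, ?_⟩
    · rintro (i | i) <;> simp <;> have := hkm i <;> omega
    intro g hg p
    have hψ : ∀ j : ℕ, ContDiff ℝ (⊤ : ℕ∞)
        (fun q : E × F => iteratedFDeriv ℝ j (fun v => g (q.1, v)) q.2) := fun j =>
      contDiff_iter_param' (f := fun (q : E × F) v => g (q.1, v)) j
        (hg.comp ((contDiff_fst.comp contDiff_fst).prodMk contDiff_snd)) contDiff_snd
    have hN : ∀ i j : ℕ, ContDiff ℝ (⊤ : ℕ∞) (fun q : E × F =>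
        iteratedFDeriv ℝ i (fun u => iteratedFDeriv ℝ j (fun v => g (u, v)) q.2) q.1) :=
      fun i j => contDiff_iter_param'
        (f := fun (q : E × F) u => iteratedFDeriv ℝ j (fun v => g (u, v)) q.2) i
        ((hψ j).comp (contDiff_snd.prodMk (contDiff_snd.comp contDiff_fst))) contDiff_fst
    have h1 : iteratedFDeriv ℝ (N + 1) g p = J (fderiv ℝ (iteratedFDeriv ℝ N g) p) := by
      rw [iteratedFDeriv_succ_eq_comp_left]; rfl
    have h2 : fderiv ℝ (iteratedFDeriv ℝ N g) p = ∑ i, (L i).comp (fderiv ℝ (fun q : E × F =>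
        iteratedFDeriv ℝ (k i) (fun u => iteratedFDeriv ℝ (m i) (fun v => g (u, v)) q.2) q.1) p) := by
      have : iteratedFDeriv ℝ N g = fun p => ∑ i, L i (iteratedFDeriv ℝ (k i)
          (fun u => iteratedFDeriv ℝ (m i) (fun v => g (u, v)) p.2) p.1) := funext (hL g hg)
      rw [this]
      refine (HasFDerivAt.fun_sum fun i _ => ?_).fderiv
      exact (L i).hasFDerivAt.comp p ((hN (k i) (m i)).differentiable (by simp) p).hasFDerivAt
    rw [h1, h2, map_sum, Fintype.sum_sum_type, ← Finset.sum_add_distrib]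
    refine Finset.sum_congr rfl fun i _ => ?_
    rw [fderiv_split (hN (k i) (m i)), ContinuousLinearMap.comp_add, map_add]
    refine congrArg₂ (· + ·) ?_ ?_
    · have h3 : fderiv ℝ (fun u => iteratedFDeriv ℝ (k i)
            (fun u => iteratedFDeriv ℝ (m i) (fun v => g (u, v)) p.2) u) p.1
          = A i (iteratedFDeriv ℝ (k i + 1)
            (fun u => iteratedFDeriv ℝ (m i) (fun v => g (u, v)) p.2) p.1) := by
        rw [iteratedFDeriv_succ_eq_comp_left]
        simp [A]
      simp only [] at h3 ⊢
      rw [h3]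
      rfl
    · rw [fderiv_iter_comm (k i) (hψ (m i))]
      have h3 : iteratedFDeriv ℝ (k i)
            (fun u => fderiv ℝ (fun v => iteratedFDeriv ℝ (m i) (fun v => g (u, v)) v) p.2) p.1
          = (B0 i).compContinuousMultilinearMap (iteratedFDeriv ℝ (k i)
            (fun u => iteratedFDeriv ℝ (m i + 1) (fun v => g (u, v)) p.2) p.1) := by
        rw [← clm_iter (F [×(m i + 1)]→L[ℝ] G) (F →L[ℝ] (F [×(m i)]→L[ℝ] G)) (B0 i)
          (f := fun u => iteratedFDeriv ℝ (m i + 1) (fun v => g (u, v)) p.2)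
          ((hψ (m i + 1)).comp (contDiff_prodMk_left p.2))]
        congr 1
      simp only [] at h3 ⊢
      rw [h3]
      rfl

theorem clm_bound (A B : Type*) [NormedAddCommGroup A] [NormedSpace ℝ A]
    [NormedAddCommGroup B] [NormedSpace ℝ B] (T : A →L[ℝ] B) :
    ∃ c : ℝ, 0 ≤ c ∧ ∀ f : E → A, ContDiff ℝ (⊤ : ℕ∞) f → ∀ (N : ℕ) (x : E),
      ‖iteratedFDeriv ℝ N (fun x => T (f x)) x‖ ≤ c * ‖iteratedFDeriv ℝ N f x‖ :=
  ⟨‖T‖, norm_nonneg _, fun _ hf _ _ =>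
    T.norm_iteratedFDeriv_comp_left hf.contDiffAt (by exact_mod_cast le_top)⟩

theorem clm_bound_two (X Y A B : Type*) [NormedAddCommGroup X] [NormedSpace ℝ X]
    [NormedAddCommGroup Y] [NormedSpace ℝ Y] [NormedAddCommGroup A] [NormedSpace ℝ A]
    [NormedAddCommGroup B] [NormedSpace ℝ B] (T : A →L[ℝ] B) (α : ℕ) :
    ∃ c : ℝ, 0 ≤ c ∧ ∀ f : X → Y → A, ContDiff ℝ (⊤ : ℕ∞) (fun q : X × Y => f q.1 q.2) →
      ∀ (γ : ℕ) (x : X) (y : Y),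
      ‖iteratedFDeriv ℝ γ (fun x => iteratedFDeriv ℝ α (fun y => T (f x y)) y) x‖
        ≤ c * ‖iteratedFDeriv ℝ γ (fun x => iteratedFDeriv ℝ α (fun y => f x y) y) x‖ := by
  let S : (Y [×α]→L[ℝ] A) →L[ℝ] (Y [×α]→L[ℝ] B) :=
    ContinuousLinearMap.compContinuousMultilinearMapL ℝ (fun _ : Fin α => Y) _ _ T
  obtain ⟨c, hc0, hc⟩ := clm_bound (E := X) (Y [×α]→L[ℝ] A) (Y [×α]→L[ℝ] B) S
  refine ⟨c, hc0, fun f hf γ x y => ?_⟩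
  have h := hc (fun x => iteratedFDeriv ℝ α (fun y => f x y) y)
    (contDiff_iter_param' (f := f) α hf contDiff_const) γ x
  have he : (fun x => iteratedFDeriv ℝ α (fun y => T (f x y)) y)
      = fun x => S (iteratedFDeriv ℝ α (fun y => f x y) y) :=
    funext fun x => clm_iter A B T (f := fun y => f x y) (hf.comp (contDiff_prodMk_right x)) α y
  rw [he]
  exact h

theorem iter_fin_sum {ι : Type} [Fintype ι] (B : Type*) [NormedAddCommGroup B] [NormedSpace ℝ B]
    (f : ι → E → B) (hf : ∀ i, ContDiff ℝ (⊤ : ℕ∞) (f i)) (N : ℕ) (x : E) :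
    iteratedFDeriv ℝ N (fun x => ∑ i, f i x) x = ∑ i, iteratedFDeriv ℝ N (f i) x := by
  rw [iteratedFDeriv_sum (fun i _ => (hf i).of_le (by exact_mod_cast le_top)), Finset.sum_apply]

theorem region_one (X E F G : Type*) [NormedAddCommGroup X] [NormedSpace ℝ X]
    [NormedAddCommGroup E] [NormedSpace ℝ E]
    [NormedAddCommGroup F] [NormedSpace ℝ F] [NormedAddCommGroup G] [NormedSpace ℝ G] (N : ℕ) :
    ∃ (ι : Type) (_ : Fintype ι) (k m : ι → ℕ) (c : ι → ℝ),
      (∀ i, k i + m i = N) ∧ (∀ i, 0 ≤ c i) ∧ ∀ g : X → E → F → G,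
        ContDiff ℝ (⊤ : ℕ∞) (fun t : X × E × F => g t.1 t.2.1 t.2.2) →
        ∀ (γ : ℕ) (x : X) (p : E × F),
        ‖iteratedFDeriv ℝ γ (fun x => iteratedFDeriv ℝ N (fun p : E × F => g x p.1 p.2) p) x‖
          ≤ ∑ i, c i * ‖iteratedFDeriv ℝ γ (fun x => iteratedFDeriv ℝ (k i)
          (fun u => iteratedFDeriv ℝ (m i) (fun v => g x u v) p.2) p.1) x‖ := by
  obtain ⟨ι, hι, k, m, L, hkm, hL⟩ := iter_prod_split E F G N
  choose c hc0 hc using fun i => clm_bound (E := X) (E [×(k i)]→L[ℝ] (F [×(m i)]→L[ℝ] G))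
    ((E × F) [×N]→L[ℝ] G) (L i)
  refine ⟨ι, hι, k, m, c, hkm, hc0, ?_⟩
  intro g hg γ x p
  have h1 : ∀ j : ℕ, ContDiff ℝ (⊤ : ℕ∞) (fun q : X × E =>
      iteratedFDeriv ℝ j (fun v => g q.1 q.2 v) p.2) := fun j =>
    contDiff_iter_param' (f := fun (q : X × E) v => g q.1 q.2 v) j
      (hg.comp (f := fun t : (X × E) × F => (t.1.1, t.1.2, t.2)) (by fun_prop)) contDiff_const
  have h2 : ∀ i j : ℕ, ContDiff ℝ (⊤ : ℕ∞) (fun x : X => iteratedFDeriv ℝ i (fun u =>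
      iteratedFDeriv ℝ j (fun v => g x u v) p.2) p.1) := fun i j =>
    contDiff_iter_param' (f := fun x u => iteratedFDeriv ℝ j (fun v => g x u v) p.2) i
      (h1 j) contDiff_const
  have hf : (fun x => iteratedFDeriv ℝ N (fun p : E × F => g x p.1 p.2) p)
      = fun x => ∑ i, L i (iteratedFDeriv ℝ (k i) (fun u =>
      iteratedFDeriv ℝ (m i) (fun v => g x u v) p.2) p.1) :=
    funext fun x => hL (fun p => g x p.1 p.2) (hg.comp (contDiff_prodMk_right x)) p
  rw [hf, iter_fin_sum ((E × F) [×N]→L[ℝ] G) (fun i x => L i (iteratedFDeriv ℝ (k i) (fun u =>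
      iteratedFDeriv ℝ (m i) (fun v => g x u v) p.2) p.1))
      (fun i => clm_contDiff (E [×(k i)]→L[ℝ] (F [×(m i)]→L[ℝ] G))
        ((E × F) [×N]→L[ℝ] G) (L i) (h2 (k i) (m i)))]
  exact (norm_sum_le _ _).trans (Finset.sum_le_sum fun i _ => hc i _ (h2 (k i) (m i)) γ x)

theorem region_two (X Y E F G : Type*) [NormedAddCommGroup X] [NormedSpace ℝ X]
    [NormedAddCommGroup Y] [NormedSpace ℝ Y] [NormedAddCommGroup E] [NormedSpace ℝ E]
    [NormedAddCommGroup F] [NormedSpace ℝ F] [NormedAddCommGroup G] [NormedSpace ℝ G] (α N : ℕ) :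
    ∃ (ι : Type) (_ : Fintype ι) (k m : ι → ℕ) (c : ι → ℝ),
      (∀ i, k i + m i = N) ∧ (∀ i, 0 ≤ c i) ∧ ∀ g : X → Y → E → F → G,
        ContDiff ℝ (⊤ : ℕ∞) (fun t : X × Y × E × F => g t.1 t.2.1 t.2.2.1 t.2.2.2) →
        ∀ (γ : ℕ) (x : X) (y : Y) (p : E × F),
        ‖iteratedFDeriv ℝ γ (fun x => iteratedFDeriv ℝ α (fun y =>
            iteratedFDeriv ℝ N (fun p : E × F => g x y p.1 p.2) p) y) x‖
          ≤ ∑ i, c i * ‖iteratedFDeriv ℝ γ (fun x => iteratedFDeriv ℝ α (fun y =>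
            iteratedFDeriv ℝ (k i)
          (fun u => iteratedFDeriv ℝ (m i) (fun v => g x y u v) p.2) p.1) y) x‖ := by
  obtain ⟨ι, hι, k, m, L, hkm, hL⟩ := iter_prod_split E F G N
  choose c hc0 hc using fun i => clm_bound_two X Y (E [×(k i)]→L[ℝ] (F [×(m i)]→L[ℝ] G))
    ((E × F) [×N]→L[ℝ] G) (L i) α
  refine ⟨ι, hι, k, m, c, hkm, hc0, ?_⟩
  intro g hg γ x y p
  have h1 : ∀ j : ℕ, ContDiff ℝ (⊤ : ℕ∞) (fun q : X × Y × E =>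
      iteratedFDeriv ℝ j (fun v => g q.1 q.2.1 q.2.2 v) p.2) := fun j =>
    contDiff_iter_param' (f := fun (q : X × Y × E) v => g q.1 q.2.1 q.2.2 v) j
      (hg.comp (f := fun t : (X × Y × E) × F => (t.1.1, t.1.2.1, t.1.2.2, t.2)) (by fun_prop))
      contDiff_const
  have h2 : ∀ i j : ℕ, ContDiff ℝ (⊤ : ℕ∞) (fun q : X × Y => iteratedFDeriv ℝ i (fun u =>
      iteratedFDeriv ℝ j (fun v => g q.1 q.2 u v) p.2) p.1) := fun i j =>
    contDiff_iter_param' (f := fun (q : X × Y) u =>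
      iteratedFDeriv ℝ j (fun v => g q.1 q.2 u v) p.2) i
      ((h1 j).comp (f := fun t : (X × Y) × E => (t.1.1, t.1.2, t.2)) (by fun_prop)) contDiff_const
  have h3 : ∀ i, ContDiff ℝ (⊤ : ℕ∞) (fun q : X × Y => L i (iteratedFDeriv ℝ (k i) (fun u =>
      iteratedFDeriv ℝ (m i) (fun v => g q.1 q.2 u v) p.2) p.1)) := fun i =>
    clm_contDiff (E [×(k i)]→L[ℝ] (F [×(m i)]→L[ℝ] G)) ((E × F) [×N]→L[ℝ] G) (L i)
      (h2 (k i) (m i))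
  have hf : (fun x => iteratedFDeriv ℝ α (fun y =>
            iteratedFDeriv ℝ N (fun p : E × F => g x y p.1 p.2) p) y)
      = fun x => ∑ i, iteratedFDeriv ℝ α (fun y => L i (iteratedFDeriv ℝ (k i) (fun u =>
      iteratedFDeriv ℝ (m i) (fun v => g x y u v) p.2) p.1)) y := by
    funext x
    have hin : (fun y => iteratedFDeriv ℝ N (fun p : E × F => g x y p.1 p.2) p)
        = fun y => ∑ i, L i (iteratedFDeriv ℝ (k i) (fun u =>
          iteratedFDeriv ℝ (m i) (fun v => g x y u v) p.2) p.1) :=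
      funext fun y => hL (fun p => g x y p.1 p.2)
        (hg.comp (f := fun q : E × F => (x, y, q.1, q.2)) (by fun_prop)) p
    rw [hin, iter_fin_sum ((E × F) [×N]→L[ℝ] G) (fun i y => L i (iteratedFDeriv ℝ (k i) (fun u =>
      iteratedFDeriv ℝ (m i) (fun v => g x y u v) p.2) p.1))
      (fun i => (h3 i).comp (contDiff_prodMk_right x))]
  rw [hf, iter_fin_sum (Y [×α]→L[ℝ] ((E × F) [×N]→L[ℝ] G))
    (fun i x => iteratedFDeriv ℝ α (fun y => L i (iteratedFDeriv ℝ (k i) (fun u =>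
      iteratedFDeriv ℝ (m i) (fun v => g x y u v) p.2) p.1)) y)
      (fun i => contDiff_iter_param' (f := fun x y => L i (iteratedFDeriv ℝ (k i) (fun u =>
      iteratedFDeriv ℝ (m i) (fun v => g x y u v) p.2) p.1)) α (h3 i) contDiff_const)]
  exact (norm_sum_le _ _).trans (Finset.sum_le_sum fun i _ => hc i (fun x y =>
    iteratedFDeriv ℝ (k i) (fun u =>
      iteratedFDeriv ℝ (m i) (fun v => g x y u v) p.2) p.1) (h2 (k i) (m i)) γ x y)

theorem rpow_compare {a b : ℝ} (hb : 0 < b) (hba : b ≤ a) (hab : a ≤ 2 * b) (s : ℝ) :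
    b ^ s ≤ 2 ^ |s| * a ^ s := by
  have ha : 0 < a := hb.trans_le hba
  rcases le_total 0 s with hs | hs
  · calc b ^ s ≤ a ^ s := Real.rpow_le_rpow hb.le hba hs
      _ ≤ _ := le_mul_of_one_le_left (by positivity)
        (Real.one_le_rpow (by norm_num) (abs_nonneg s))
  · have h1 : (2 * b) ^ s ≤ a ^ s := Real.rpow_le_rpow_of_nonpos ha hab hs
    rw [Real.mul_rpow (by norm_num) hb.le] at h1
    calc b ^ s = 2 ^ |s| * (2 ^ s * b ^ s) := by
          rw [← mul_assoc, ← Real.rpow_add (by norm_num), abs_of_nonpos hs]; simp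
      _ ≤ _ := by gcongr

end Helpers

/-- Region estimates for a triple symbol-valued symbol of order `(M₁,M₂,M₃)`:
where `|ξ′| ≤ |ξ″|` it behaves as a symbol-valued symbol of order `(M₁+M₂, M₃)`,
and where `|ξ″| ≤ |ξ‴|` as one of order `(M₁, M₂+M₃)`. -/
theorem stmt17 (n d₁ d₂ d₃ : ℕ) (hn : 1 ≤ n) (hd₁ : 1 ≤ d₁) (hd₂ : 1 ≤ d₂)
    (hd₃ : 1 ≤ d₃) (M₁ M₂ M₃ : ℝ)
    (a : EuclideanSpace ℝ (Fin n) → EuclideanSpace ℝ (Fin d₁) →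
      EuclideanSpace ℝ (Fin d₂) → EuclideanSpace ℝ (Fin d₃) → ℂ)
    (ha_smooth : ContDiff ℝ (⊤ : ℕ∞)
      (fun p : EuclideanSpace ℝ (Fin n) × EuclideanSpace ℝ (Fin d₁) ×
          EuclideanSpace ℝ (Fin d₂) × EuclideanSpace ℝ (Fin d₃) =>
        a p.1 p.2.1 p.2.2.1 p.2.2.2))
    (ha : ∀ γ α β η : ℕ, ∃ C : ℝ, ∀ x ξ' ξ'' ξ''',
      ‖iteratedFDeriv ℝ γ (fun x => iteratedFDeriv ℝ α (fun ξ' =>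
          iteratedFDeriv ℝ β (fun ξ'' => iteratedFDeriv ℝ η (fun ξ''' =>
            a x ξ' ξ'' ξ''') ξ''') ξ'') ξ') x‖ ≤
        C * jap3 ξ' ξ'' ξ''' ^ (M₁ - (α : ℝ)) * jap2 ξ'' ξ''' ^ (M₂ - (β : ℝ)) *
          jap ξ''' ^ (M₃ - (η : ℝ))) :
    (∀ γ α η : ℕ, ∃ C' : ℝ,
      ∀ (x : EuclideanSpace ℝ (Fin n))
        (p : EuclideanSpace ℝ (Fin d₁) × EuclideanSpace ℝ (Fin d₂))
        (ξ''' : EuclideanSpace ℝ (Fin d₃)), ‖p.1‖ ≤ ‖p.2‖ →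
      ‖iteratedFDeriv ℝ γ (fun x => iteratedFDeriv ℝ α
          (fun p : EuclideanSpace ℝ (Fin d₁) × EuclideanSpace ℝ (Fin d₂) =>
            iteratedFDeriv ℝ η (fun ξ''' => a x p.1 p.2 ξ''') ξ''') p) x‖ ≤
        C' * jap3 p.1 p.2 ξ''' ^ (M₁ + M₂ - (α : ℝ)) * jap ξ''' ^ (M₃ - (η : ℝ))) ∧
    (∀ γ α β : ℕ, ∃ C' : ℝ,
      ∀ (x : EuclideanSpace ℝ (Fin n)) (ξ' : EuclideanSpace ℝ (Fin d₁))
        (q : EuclideanSpace ℝ (Fin d₂) × EuclideanSpace ℝ (Fin d₃)), ‖q.1‖ ≤ ‖q.2‖ →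
      ‖iteratedFDeriv ℝ γ (fun x => iteratedFDeriv ℝ α (fun ξ' =>
          iteratedFDeriv ℝ β
            (fun q : EuclideanSpace ℝ (Fin d₂) × EuclideanSpace ℝ (Fin d₃) =>
              a x ξ' q.1 q.2) q) ξ') x‖ ≤
        C' * jap3 ξ' q.1 q.2 ^ (M₁ - (α : ℝ)) * jap2 q.1 q.2 ^ (M₂ + M₃ - (β : ℝ))) := by
  constructor
  · intro γ α η
    obtain ⟨ι, hι, k, m, c, hkm, hc0, hc⟩ := region_one (EuclideanSpace ℝ (Fin n))
      (EuclideanSpace ℝ (Fin d₁)) (EuclideanSpace ℝ (Fin d₂))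
      (EuclideanSpace ℝ (Fin d₃) [×η]→L[ℝ] ℂ) α
    choose C hC using fun i => ha γ (k i) (m i) η
    refine ⟨∑ i, c i * (|C i| * 2 ^ |M₂ - (m i : ℝ)|), ?_⟩
    intro x p ξ''' hp
    have h0 : ContDiff ℝ (⊤ : ℕ∞) (fun q : EuclideanSpace ℝ (Fin n) ×
        EuclideanSpace ℝ (Fin d₁) × EuclideanSpace ℝ (Fin d₂) =>
        iteratedFDeriv ℝ η (fun ξ''' => a q.1 q.2.1 q.2.2 ξ''') ξ''') :=
      contDiff_iter_param' (f := fun (q : EuclideanSpace ℝ (Fin n) ×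
        EuclideanSpace ℝ (Fin d₁) × EuclideanSpace ℝ (Fin d₂)) ξ''' => a q.1 q.2.1 q.2.2 ξ''') η
        (ha_smooth.comp (f := fun t : (EuclideanSpace ℝ (Fin n) × EuclideanSpace ℝ (Fin d₁) ×
          EuclideanSpace ℝ (Fin d₂)) × EuclideanSpace ℝ (Fin d₃) =>
            (t.1.1, t.1.2.1, t.1.2.2, t.2)) (by fun_prop)) contDiff_const
    refine (hc (fun x ξ' ξ'' => iteratedFDeriv ℝ η (fun ξ''' => a x ξ' ξ'' ξ''') ξ''')
      h0 γ x p).trans ?_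
    rw [Finset.sum_mul, Finset.sum_mul]
    refine Finset.sum_le_sum fun i _ => ?_
    have hb := hC i x p.1 p.2 ξ'''
    have hB : 0 < jap2 p.2 ξ''' := Real.sqrt_pos.2 (by positivity)
    have hA : 0 < jap3 p.1 p.2 ξ''' := Real.sqrt_pos.2 (by positivity)
    have hD : 0 < jap ξ''' := Real.sqrt_pos.2 (by positivity)
    have hBA : jap2 p.2 ξ''' ≤ jap3 p.1 p.2 ξ''' := by
      apply Real.sqrt_le_sqrt; nlinarith [sq_nonneg ‖p.1‖]
    have hAB : jap3 p.1 p.2 ξ''' ≤ 2 * jap2 p.2 ξ''' := by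
      unfold jap3 jap2
      rw [Real.sqrt_le_left (by positivity), mul_pow, Real.sq_sqrt (by positivity)]
      have := pow_le_pow_left₀ (norm_nonneg p.1) hp 2
      nlinarith [sq_nonneg ‖p.2‖, sq_nonneg ‖ξ'''‖]
    have hcmp := rpow_compare hB hBA hAB (M₂ - (m i : ℝ))
    have hsum : M₁ + M₂ - (α : ℝ) = (M₁ - (k i : ℝ)) + (M₂ - (m i : ℝ)) := by
      rw [← hkm i]; push_cast; ring
    rw [hsum, Real.rpow_add hA, mul_assoc, mul_assoc]
    refine mul_le_mul_of_nonneg_left (hb.trans ?_) (hc0 i)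
    have hP := Real.rpow_pos_of_pos hA (M₁ - (k i : ℝ))
    have hQ := Real.rpow_pos_of_pos hB (M₂ - (m i : ℝ))
    have hR := Real.rpow_pos_of_pos hD (M₃ - (η : ℝ))
    calc C i * jap3 p.1 p.2 ξ''' ^ (M₁ - (k i : ℝ)) * jap2 p.2 ξ''' ^ (M₂ - (m i : ℝ)) *
          jap ξ''' ^ (M₃ - (η : ℝ))
        ≤ |C i| * jap3 p.1 p.2 ξ''' ^ (M₁ - (k i : ℝ)) *
          (2 ^ |M₂ - (m i : ℝ)| * jap3 p.1 p.2 ξ''' ^ (M₂ - (m i : ℝ))) *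
          jap ξ''' ^ (M₃ - (η : ℝ)) := by
          gcongr
          exact le_abs_self _
      _ = _ := by ring
  · intro γ α β
    obtain ⟨ι, hι, k, m, c, hkm, hc0, hc⟩ := region_two (EuclideanSpace ℝ (Fin n))
      (EuclideanSpace ℝ (Fin d₁)) (EuclideanSpace ℝ (Fin d₂)) (EuclideanSpace ℝ (Fin d₃)) ℂ α β
    choose C hC using fun i => ha γ α (k i) (m i)
    refine ⟨∑ i, c i * (|C i| * 2 ^ |M₃ - (m i : ℝ)|), ?_⟩
    intro x ξ' q hq
    refine (hc a ha_smooth γ x ξ' q).trans ?_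
    rw [Finset.sum_mul, Finset.sum_mul]
    refine Finset.sum_le_sum fun i _ => ?_
    have hb := hC i x ξ' q.1 q.2
    have hB : 0 < jap2 q.1 q.2 := Real.sqrt_pos.2 (by positivity)
    have hA : 0 < jap3 ξ' q.1 q.2 := Real.sqrt_pos.2 (by positivity)
    have hD : 0 < jap q.2 := Real.sqrt_pos.2 (by positivity)
    have hDB : jap q.2 ≤ jap2 q.1 q.2 := by
      apply Real.sqrt_le_sqrt; nlinarith [sq_nonneg ‖q.1‖]
    have hBD : jap2 q.1 q.2 ≤ 2 * jap q.2 := by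
      unfold jap jap2
      rw [Real.sqrt_le_left (by positivity), mul_pow, Real.sq_sqrt (by positivity)]
      have := pow_le_pow_left₀ (norm_nonneg q.1) hq 2
      nlinarith [sq_nonneg ‖q.2‖]
    have hcmp := rpow_compare hD hDB hBD (M₃ - (m i : ℝ))
    have hsum : M₂ + M₃ - (β : ℝ) = (M₂ - (k i : ℝ)) + (M₃ - (m i : ℝ)) := by
      rw [← hkm i]; push_cast; ring
    rw [hsum, Real.rpow_add hB, mul_assoc, mul_assoc]
    refine mul_le_mul_of_nonneg_left (hb.trans ?_) (hc0 i)
    have hP := Real.rpow_pos_of_pos hA (M₁ - (α : ℝ))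
    have hQ := Real.rpow_pos_of_pos hB (M₂ - (k i : ℝ))
    have hR := Real.rpow_pos_of_pos hD (M₃ - (m i : ℝ))
    calc C i * jap3 ξ' q.1 q.2 ^ (M₁ - (α : ℝ)) * jap2 q.1 q.2 ^ (M₂ - (k i : ℝ)) *
          jap q.2 ^ (M₃ - (m i : ℝ))
        ≤ |C i| * jap3 ξ' q.1 q.2 ^ (M₁ - (α : ℝ)) * jap2 q.1 q.2 ^ (M₂ - (k i : ℝ)) *
          (2 ^ |M₃ - (m i : ℝ)| * jap2 q.1 q.2 ^ (M₃ - (m i : ℝ))) := by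
          gcongr
          exact le_abs_self _
      _ = _ := by ring
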